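/- For every n ≥ 2, the string x = db(n) ++ 0^{n−1} is a prefix of S_n, every binary string w of length n occurs exactly once as a substring of x, and consequently every binary string v of length n−1 occurs at least twice as a substring of x, with v·0 and v·1 each occurring exactly once as substrings of x. -/

import Mathlib

/-- `occ w x`: the number of indices `i` with `x[i..i+|w|-1] = w`,
i.e. the number of occurrences of `w` as a substring of `x`. -/
def occ (w x : List Bool) : ℕ :=
  ((List.range (x.length + 1 - w.length)).filter
    (fun i => decide ((x.drop i).take w.length = w))).length

/-- `occB w x`: the number of occurrences of `w` as a substring of `x`
starting at a position divisible by `|w|` (aligned block occurrences). -/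
def occB (w x : List Bool) : ℕ :=
  ((List.range (x.length + 1 - w.length)).filter
    (fun i => decide (i % w.length = 0) && decide ((x.drop i).take w.length = w))).length

/-- `x` is a de Bruijn string of order `n`: it has length `2^n` and every binary
string of length `n` occurs exactly once as a substring of `x ++ x[0..n-2]`. -/
def IsDeBruijn (n : ℕ) (x : List Bool) : Prop :=
  x.length = 2 ^ n ∧ ∀ w : List Bool, w.length = n → occ w (x ++ x.take (n - 1)) = 1

open Classical in
/-- `db n` is the lexicographically least de Bruijn string of order `n`
(using the lexicographic order on `List Bool`, with `false < true`);
`[]` if none exists. -/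
noncomputable def db (n : ℕ) : List Bool :=
  if h : ∃ x : List Bool, IsDeBruijn n x ∧ ∀ y, IsDeBruijn n y → x ≤ y then h.choose else []

/-- The block `B_{n,i} = db_i(n)^t`: `t` copies of the cyclic left shift of `db n` by `i`. -/
noncomputable def Bblk (n t i : ℕ) : List Bool := (List.replicate t ((db n).rotate i)).flatten

/-- The odd part `t` of `n = 2^s * t`. -/
def oddPart (n : ℕ) : ℕ := n / 2 ^ (n.factorization 2)

/-- `Sblk n` is the string `S_n = B_{n,0} B_{n,1} ⋯ B_{n,2^s-1}` where `n = 2^s * t`, `t` odd. -/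
noncomputable def Sblk (n : ℕ) : List Bool :=
  ((List.range (2 ^ (n.factorization 2))).map (fun i => Bblk n (oddPart n) i)).flatten

/-- `Sfin m = S_1 S_2 ⋯ S_m`. -/
noncomputable def Sfin (m : ℕ) : List Bool := ((List.range m).map (fun k => Sblk (k + 1))).flatten

/-- The infinite sequence `S = S_1 S_2 S_3 ⋯`, as a function giving its `i`-th bit. -/
noncomputable def Sseq (i : ℕ) : Bool := (Sfin (i + 1)).getD i false

/-- For odd `n`, `S_n = db(n)^n`. -/
noncomputable def Sodd (n : ℕ) : List Bool := (List.replicate n (db n)).flatten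

theorem occ_card (w x : List Bool) : occ w x =
    ((Finset.range (x.length + 1 - w.length)).filter
      (fun i => (x.drop i).take w.length = w)).card := by
  rfl

theorem occ_one_iff (w x : List Bool) : occ w x = 1 ↔
    ∃! i, i < x.length + 1 - w.length ∧ (x.drop i).take w.length = w := by
  rw [occ_card, Finset.card_eq_one]
  constructor
  · rintro ⟨a, ha⟩
    refine ⟨a, ?_, ?_⟩
    · have : a ∈ ({a} : Finset ℕ) := by simp
      rw [← ha] at this
      simpa using this
    · intro y hy
      have : y ∈ ({a} : Finset ℕ) := by
        rw [← ha]; simpa using hy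
      simpa using this
  · rintro ⟨a, ha, hu⟩
    refine ⟨a, ?_⟩
    ext y
    simp only [Finset.mem_filter, Finset.mem_range, Finset.mem_singleton]
    exact ⟨fun h => hu y h, fun h => h ▸ ha⟩

theorem take_drop_eq_iff (w x : List Bool) (i : ℕ) :
    (x.drop i).take w.length = w ↔ ∀ j < w.length, x[i + j]? = w[j]? := by
  constructor
  · intro h j hj
    have := congrArg (fun l => l[j]?) h
    simpa [List.getElem?_take, hj] using this
  · intro h
    apply List.ext_getElem?
    intro j
    by_cases hj : j < w.length
    · simpa [List.getElem?_take, hj] using h j hj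
    · simp [List.getElem?_take, hj]

/-- Cyclic characterisation of de Bruijn strings. -/
theorem isDeBruijn_iff (n : ℕ) (hn : 1 ≤ n) (x : List Bool) : IsDeBruijn n x ↔
    x.length = 2 ^ n ∧ ∀ w : List Bool, w.length = n →
      ∃! i, i < 2 ^ n ∧ ∀ j < n, x[(i + j) % 2 ^ n]? = w[j]? := by
  unfold IsDeBruijn
  refine and_congr_right fun hx => forall_congr' fun w => forall_congr' fun hw => ?_
  rw [occ_one_iff]
  have hN : n < 2 ^ n := Nat.lt_two_pow_self
  refine existsUnique_congr fun i => ?_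
  have hl : (x ++ x.take (n - 1)).length + 1 - w.length = 2 ^ n := by
    simp [hx, hw]; omega
  rw [hl]
  refine and_congr_right fun hi => ?_
  rw [take_drop_eq_iff, hw]
  refine forall_congr' fun j => forall_congr' fun hj => ?_
  suffices h : (x ++ x.take (n - 1))[i + j]? = x[(i + j) % 2 ^ n]? by rw [h]
  by_cases h : i + j < 2 ^ n
  · rw [Nat.mod_eq_of_lt h, List.getElem?_append_left (by omega)]
  · have h2 : (i + j) % 2 ^ n = i + j - 2 ^ n := by
      rw [Nat.mod_eq_sub_mod (by omega), Nat.mod_eq_of_lt (by omega)]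
    rw [h2, List.getElem?_append_right (by omega), hx, List.getElem?_take, if_pos (by omega)]

theorem isDeBruijn_rotate (n : ℕ) (hn : 1 ≤ n) (x : List Bool) (hx : IsDeBruijn n x) (r : ℕ)
    (hr : r < 2 ^ n) : IsDeBruijn n (x.rotate r) := by
  rw [isDeBruijn_iff n hn] at hx ⊢
  obtain ⟨hl, h⟩ := hx
  refine ⟨by simpa using hl, fun w hw => ?_⟩
  obtain ⟨i, ⟨hi, hij⟩, hu⟩ := h w hw
  have key : ∀ a, (x.rotate r)[a % 2 ^ n]? = x[(a + r) % 2 ^ n]? := by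
    intro a
    rw [List.getElem?_rotate (by rw [hl]; exact Nat.mod_lt _ (by positivity)), hl]
    simp
  simp only [key]
  have e1 : ∀ j, ((i + (2 ^ n - r)) % 2 ^ n + j + r) % 2 ^ n = (i + j) % 2 ^ n := by
    intro j
    have : (i + (2 ^ n - r)) % 2 ^ n + j + r = (i + (2 ^ n - r)) % 2 ^ n + (j + r) := by ring
    rw [this, Nat.mod_add_mod]
    have : i + (2 ^ n - r) + (j + r) = i + j + 2 ^ n := by omega
    rw [this, Nat.add_mod_right]
  refine ⟨(i + (2 ^ n - r)) % 2 ^ n, ⟨Nat.mod_lt _ (by positivity), fun j hj => ?_⟩, ?_⟩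
  · rw [e1]; exact hij j hj
  · rintro y ⟨hy, hyj⟩
    have := hu ((y + r) % 2 ^ n) ⟨Nat.mod_lt _ (by positivity), fun j hj => by
      rw [Nat.mod_add_mod, ← hyj j hj]; congr 2; ring⟩
    rw [← this, Nat.mod_add_mod]
    have : y + r + (2 ^ n - r) = y + 2 ^ n := by omega
    rw [this, Nat.add_mod_right, Nat.mod_eq_of_lt hy]

theorem starts_zero_of_le (n : ℕ) : ∀ x y : List Bool, x.length = y.length →
    x ≤ y → List.replicate n false <+: y → List.replicate n false <+: x := by
  induction n with
  | zero => intro x y _ _ _; simp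
  | succ n ih =>
    intro x y hl hle hp
    cases y with
    | nil => simp [List.replicate_succ] at hp
    | cons b y =>
      cases x with
      | nil => simp at hl
      | cons a x =>
        simp only [List.replicate_succ, List.cons_prefix_cons] at hp ⊢
        obtain ⟨rfl, hp⟩ := hp
        have : a = false ∧ x ≤ y := by
          have hle := not_lt.2 hle
          rw [List.cons_lt_cons_iff] at hle
          cases a
          · exact ⟨rfl, not_lt.1 fun h => hle (Or.inr ⟨rfl, h⟩)⟩
          · exact absurd (Or.inl (by decide)) hle
        exact ⟨this.1.symm, ih x y (by simpa using hl) this.2 hp⟩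

theorem exists_least (n : ℕ) (h : ∃ x, IsDeBruijn n x) :
    ∃ x : List Bool, IsDeBruijn n x ∧ ∀ y, IsDeBruijn n y → x ≤ y := by
  have hf : {x | IsDeBruijn n x}.Finite :=
    (List.finite_length_eq Bool (2 ^ n)).subset fun x hx => hx.1
  obtain ⟨x, hx, hm⟩ := Set.exists_min_image _ (fun x : List Bool => x) hf h
  exact ⟨x, hx, fun y hy => hm y hy⟩

/-! ### Existence by cycle joining -/

def IsShift (m : ℕ) (σ : Equiv.Perm (Fin (m + 1) → Bool)) : Prop :=
  ∀ w, ∀ i : Fin m, σ w i.castSucc = w i.succ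

theorem isShift_exists (m : ℕ) : ∃ σ, IsShift m σ := by
  refine ⟨Equiv.arrowCongr (finRotate (m + 1)).symm (Equiv.refl _), fun w i => ?_⟩
  simp

theorem join (m : ℕ) (σ : Equiv.Perm (Fin (m + 1) → Bool)) (z w w' : Fin (m + 1) → Bool)
    (hw : σ.SameCycle z w) (hw' : ¬ σ.SameCycle z w') :
    (∀ y, σ.SameCycle z y → (σ * Equiv.swap w w').SameCycle z y) ∧
      (σ * Equiv.swap w w').SameCycle z w' := by
  set τ := σ * Equiv.swap w w' with hτ
  have step : ∀ y, τ.SameCycle w (τ y) → τ.SameCycle w y := fun y h =>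
    Equiv.Perm.sameCycle_apply_right.1 h
  have back : ∀ k : ℕ, τ.SameCycle w ((σ⁻¹ ^ k) w) := by
    intro k
    induction k with
    | zero => exact Equiv.Perm.SameCycle.refl _ _
    | succ k ih =>
      by_cases h1 : (σ⁻¹ ^ (k + 1)) w = w
      · rw [h1]
      · apply step
        have h2 : (σ⁻¹ ^ (k + 1)) w ≠ w' := by
          intro h
          apply hw'
          rw [← h]
          refine hw.trans ⟨-((k + 1 : ℕ) : ℤ), ?_⟩
          rw [zpow_neg, zpow_natCast, inv_pow]
        rw [hτ, Equiv.Perm.mul_apply, Equiv.swap_apply_of_ne_of_ne h1 h2, pow_succ',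
          Equiv.Perm.mul_apply]
        simpa using ih
  have all : ∀ y, σ.SameCycle w y → τ.SameCycle w y := by
    intro y hy
    obtain ⟨k, hk⟩ := (Equiv.Perm.sameCycle_inv.2 hy).exists_nat_pow_eq
    rw [← hk]; exact back k
  have hz : τ.SameCycle z w := (all z hw.symm).symm
  refine ⟨fun y hy => hz.trans (all y (hw.symm.trans hy)), hz.trans ?_⟩
  apply step
  rw [hτ, Equiv.Perm.mul_apply, Equiv.swap_apply_right]
  exact all _ (Equiv.Perm.sameCycle_apply_right.2 (Equiv.Perm.SameCycle.refl _ _))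

theorem reach (m : ℕ) (P : (Fin (m + 1) → Bool) → Prop) (h0 : P fun _ => false)
    (hs : ∀ w u, P w → (∀ i : Fin m, u i.castSucc = w i.succ) → P u) (v) : P v := by
  have : ∀ k ≤ m + 1, P fun i => if h : m + 1 ≤ i.1 + k then v ⟨(i.1 + k - (m + 1)) % (m + 1), Nat.mod_lt _ (by omega)⟩
      else false := by
    intro k
    induction k with
    | zero =>
      intro _
      convert h0 using 2 with i
      rw [dif_neg (by omega)]
    | succ k ih =>
      intro hk
      refine hs _ _ (ih (by omega)) ?_
      intro i
      simp only [Fin.val_castSucc, Fin.val_succ]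
      have : i.1 + (k + 1) = i.1 + 1 + k := by ring
      simp only [this]
  have := this (m + 1) le_rfl
  have e : ∀ i : Fin (m + 1), i.1 % (m + 1) = i.1 := fun i => Nat.mod_eq_of_lt i.2
  simpa [e] using this

theorem shift_ext (m : ℕ) (a b c : Fin (m + 1) → Bool) (hab : a ≠ b)
    (h1 : ∀ i : Fin m, a i.castSucc = b i.castSucc)
    (h2 : ∀ i : Fin m, c i.castSucc = a i.castSucc) : c = a ∨ c = b := by
  have hl : a (Fin.last m) ≠ b (Fin.last m) := by
    intro h
    apply hab
    funext i
    refine Fin.lastCases h h1 i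
  by_cases hc : c (Fin.last m) = a (Fin.last m)
  · left; funext i; exact Fin.lastCases hc h2 i
  · right; funext i
    refine Fin.lastCases ?_ (fun i => (h2 i).trans (h1 i)) i
    revert hl hc
    cases a (Fin.last m) <;> cases b (Fin.last m) <;> cases c (Fin.last m) <;> simp

theorem exists_transitive (m : ℕ) : ∃ σ, IsShift m σ ∧
    ∀ y, σ.SameCycle (fun _ => false) y := by
  classical
  obtain ⟨σ, hσ, hmax⟩ := Set.exists_max_image {σ | IsShift m σ}
    (fun σ => (Finset.univ.filter fun y => σ.SameCycle (fun _ => false) y).card)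
    (Set.toFinite _) (isShift_exists m)
  refine ⟨σ, hσ, ?_⟩
  let flip : (Fin (m + 1) → Bool) → (Fin (m + 1) → Bool) := fun w => Function.update w 0 (! w 0)
  have hfs : ∀ w, ∀ i : Fin m, flip w i.succ = w i.succ := by
    intro w i
    simp [flip, Fin.succ_ne_zero]
  have hfn : ∀ w, w ≠ flip w := by
    intro w h
    have := congrFun h 0
    simp [flip] at this
  have hflip : ∀ w, σ.SameCycle (fun _ => false) w → σ.SameCycle (fun _ => false) (flip w) := by
    intro w hw
    by_contra hw'
    obtain ⟨j1, j2⟩ := join m σ _ w (flip w) hw hw'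
    have hsh : IsShift m (σ * Equiv.swap w (flip w)) := by
      intro y i
      rw [Equiv.Perm.mul_apply, hσ]
      by_cases h1 : y = w
      · subst h1; rw [Equiv.swap_apply_left, hfs]
      · by_cases h2 : y = flip w
        · rw [h2, Equiv.swap_apply_right, hfs]
        · rw [Equiv.swap_apply_of_ne_of_ne h1 h2]
    have := hmax _ hsh
    refine absurd this (not_le.2 (Finset.card_lt_card ?_))
    rw [Finset.ssubset_iff_of_subset]
    · exact ⟨flip w, by simpa using j2, by simpa using hw'⟩
    · intro y hy
      simp only [Finset.mem_filter, Finset.mem_univ, true_and] at hy ⊢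
      exact j1 y hy
  refine reach m _ (Equiv.Perm.SameCycle.refl _ _) ?_
  intro w u hw hu
  rcases shift_ext m (σ w) (σ (flip w)) u (fun h => hfn w (σ.injective h))
    (fun i => by rw [hσ, hσ, hfs]) (fun i => by rw [hσ, hu]) with h | h
  · rw [h]; exact Equiv.Perm.sameCycle_apply_right.2 hw
  · rw [h]; exact Equiv.Perm.sameCycle_apply_right.2 (hflip w hw)

theorem exists_deBruijn (n : ℕ) (hn : 1 ≤ n) : ∃ x, IsDeBruijn n x := by
  obtain ⟨m, rfl⟩ : ∃ m, n = m + 1 := ⟨n - 1, by omega⟩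
  obtain ⟨σ, hσ, ht⟩ := exists_transitive m
  set z : Fin (m + 1) → Bool := fun _ => false with hz
  have hN : 0 < 2 ^ (m + 1) := by positivity
  have hper : Function.minimalPeriod σ z = 2 ^ (m + 1) := by
    have hpos : 0 < Function.minimalPeriod σ z :=
      Function.minimalPeriod_pos_of_mem_periodicPts
        (Function.Injective.mem_periodicPts σ.injective z)
    have hb : Function.Bijective (fun i : Fin (Function.minimalPeriod σ z) => (σ ^ i.1) z) := by
      constructor
      · intro a b hab
        simp only [Equiv.Perm.coe_pow] at hab
        exact Fin.ext ((Function.iterate_eq_iterate_iff_of_lt_minimalPeriod a.2 b.2).1 hab)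
      · intro y
        obtain ⟨k, hk⟩ := (ht y).exists_nat_pow_eq
        refine ⟨⟨k % _, Nat.mod_lt _ hpos⟩, ?_⟩
        simp only [Equiv.Perm.coe_pow] at hk ⊢
        rw [Function.iterate_mod_minimalPeriod_eq, hk]
    have := Fintype.card_of_bijective hb
    simpa using this
  have hwin : ∀ k, ∀ j (hj : j < m + 1), (σ^[k] z) ⟨j, hj⟩ = (σ^[k + j] z) 0 := by
    intro k j
    induction j generalizing k with
    | zero => intro hj; rfl
    | succ j ih =>
      intro hj
      have h := hσ (σ^[k] z) ⟨j, by omega⟩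
      rw [← Function.iterate_succ_apply' σ k z] at h
      have h3 := ih (k + 1) (by omega)
      have h4 : k + (j + 1) = k + 1 + j := by ring
      rw [h4, ← h3]
      exact h.symm
  refine ⟨(List.range (2 ^ (m + 1))).map fun k => (σ^[k] z) 0, ?_⟩
  rw [isDeBruijn_iff _ hn]
  refine ⟨by simp, fun w hw => ?_⟩
  have key : ∀ i, (∀ j < m + 1, ((List.range (2 ^ (m + 1))).map
      fun k => (σ^[k] z) 0)[(i + j) % 2 ^ (m + 1)]? = w[j]?) ↔
      σ^[i] z = fun j => w[j.1]'(by omega) := by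
    intro i
    have e : ∀ j (hj : j < m + 1), ((List.range (2 ^ (m + 1))).map
        fun k => (σ^[k] z) 0)[(i + j) % 2 ^ (m + 1)]? = some ((σ^[i] z) ⟨j, hj⟩) := by
      intro j hj
      rw [List.getElem?_map, List.getElem?_range (Nat.mod_lt _ hN), hwin]
      have : σ^[(i + j) % 2 ^ (m + 1)] z = σ^[i + j] z := by
        rw [← hper]; exact Function.iterate_mod_minimalPeriod_eq
      simp [this]
    constructor
    · intro h
      funext j
      have := h j.1 j.2
      rw [e _ j.2, List.getElem?_eq_getElem (by omega)] at this
      exact Option.some.inj this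
    · intro h j hj
      rw [e _ hj, h, List.getElem?_eq_getElem (by omega)]
  simp only [key]
  obtain ⟨k, hk⟩ := (ht (fun j => w[j.1]'(by omega))).exists_nat_pow_eq
  rw [Equiv.Perm.coe_pow] at hk
  refine ⟨k % 2 ^ (m + 1), ⟨Nat.mod_lt _ hN, ?_⟩, ?_⟩
  · rw [← hk, ← hper]; exact Function.iterate_mod_minimalPeriod_eq
  · rintro y ⟨hy, hyw⟩
    rw [← hper] at hy
    refine (Function.iterate_eq_iterate_iff_of_lt_minimalPeriod hy
      (by rw [hper]; exact Nat.mod_lt _ hN)).1 ?_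
    rw [hyw, ← hk, ← hper]; exact Function.iterate_mod_minimalPeriod_eq.symm

theorem db_spec (n : ℕ) (hn : 1 ≤ n) :
    IsDeBruijn n (db n) ∧ ∀ y, IsDeBruijn n y → db n ≤ y := by
  have h := exists_least n (exists_deBruijn n hn)
  unfold db
  rw [dif_pos h]
  exact h.choose_spec

theorem db_starts_zero (n : ℕ) (hn : 1 ≤ n) : List.replicate n false <+: db n := by
  obtain ⟨h1, h2⟩ := db_spec n hn
  have h3 := h1
  rw [isDeBruijn_iff n hn] at h3
  obtain ⟨hl, h3⟩ := h3
  obtain ⟨i, ⟨hi, hij⟩, -⟩ := h3 (List.replicate n false) (by simp)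
  refine starts_zero_of_le n _ ((db n).rotate i) (by simp)
    (h2 _ (isDeBruijn_rotate n hn _ h1 i hi)) ?_
  have hN : n < 2 ^ n := Nat.lt_two_pow_self
  rw [List.prefix_iff_eq_take]
  symm
  have := (take_drop_eq_iff (List.replicate n false) ((db n).rotate i) 0).2 (by
    intro j hj
    rw [List.length_replicate] at hj
    rw [← hij j hj, Nat.zero_add, List.getElem?_rotate (by omega), hl, Nat.add_comm])
  simpa using this

theorem occ_two (v x : List Bool) (h0 : occ (v ++ [false]) x = 1)
    (h1 : occ (v ++ [true]) x = 1) : 2 ≤ occ v x := by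
  rw [occ_one_iff] at h0 h1
  obtain ⟨a, ⟨ha, ha'⟩, -⟩ := h0
  obtain ⟨b, ⟨hb, hb'⟩, -⟩ := h1
  have hab : a ≠ b := by
    rintro rfl
    simp only [List.length_append, List.length_singleton] at ha' hb'
    rw [ha'] at hb'
    simp at hb'
  have sub : ∀ (c : Bool) (i : ℕ), (x.drop i).take (v ++ [c]).length = v ++ [c] →
      (x.drop i).take v.length = v := by
    intro c i h
    have := congrArg (List.take v.length) h
    simpa [List.take_take] using this
  rw [occ_card]
  rw [← Finset.card_pair hab]
  apply Finset.card_le_card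
  intro i hi
  simp only [List.length_append, List.length_singleton] at ha hb
  simp only [Finset.mem_insert, Finset.mem_singleton] at hi
  rw [Finset.mem_filter, Finset.mem_range]
  rcases hi with rfl | rfl
  · exact ⟨by omega, sub _ _ ha'⟩
  · exact ⟨by omega, sub _ _ hb'⟩

theorem prefix_Sblk (n : ℕ) (hn : 2 ≤ n) :
    (db n ++ List.replicate (n - 1) false) <+: Sblk n := by
  have hp := db_starts_zero n (by omega)
  obtain ⟨r, hr⟩ := hp
  have hn1 : n = (n - 1) + 1 := by omega
  have hp0 : List.replicate (n - 1) false <+: db n :=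
    ⟨false :: r, by
      rw [← hr]; conv_rhs => rw [hn1, List.replicate_succ']
      simp⟩
  have hp1 : List.replicate (n - 1) false <+: (db n).rotate 1 := by
    refine ⟨r ++ [false], ?_⟩
    rw [← hr]
    conv_rhs => rw [hn1, List.replicate_succ]
    simp
  have hmul : 2 ^ (n.factorization 2) * oddPart n = n := Nat.ordProj_mul_ordCompl_eq_self n 2
  unfold Sblk
  have ht : oddPart n ≠ 0 := by rintro h; rw [h] at hmul; omega
  obtain ⟨s, hs⟩ : ∃ s, 2 ^ (n.factorization 2) = s + 1 :=
    ⟨2 ^ (n.factorization 2) - 1, by have : 0 < 2 ^ (n.factorization 2) := by positivity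
                                     omega⟩
  rw [hs] at hmul ⊢
  rw [List.range_succ_eq_map, List.map_cons, List.flatten_cons]
  obtain ⟨t, ht⟩ := Nat.exists_eq_succ_of_ne_zero ht
  rw [ht] at hmul ⊢
  cases t with
  | succ t =>
    simp only [Bblk, List.replicate_succ, List.flatten_cons, List.rotate_zero, List.append_assoc]
    rw [List.prefix_append_right_inj]
    exact hp0.trans (List.prefix_append _ _)
  | zero =>
    cases s with
    | zero => omega
    | succ s =>
      simp only [Bblk, List.range_succ_eq_map, List.map_cons, List.flatten_cons,
        List.replicate_succ, List.replicate_zero, List.flatten_nil, List.append_nil,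
        List.rotate_zero]
      rw [List.prefix_append_right_inj]
      exact hp1.trans (List.prefix_append _ _)

theorem stmt5 (n : ℕ) (hn : 2 ≤ n) :
    (db n ++ List.replicate (n - 1) false) <+: Sblk n ∧
    (∀ w : List Bool, w.length = n →
      occ w (db n ++ List.replicate (n - 1) false) = 1) ∧
    (∀ v : List Bool, v.length = n - 1 →
      2 ≤ occ v (db n ++ List.replicate (n - 1) false) ∧
      occ (v ++ [false]) (db n ++ List.replicate (n - 1) false) = 1 ∧
      occ (v ++ [true]) (db n ++ List.replicate (n - 1) false) = 1) := by
  have h2 : ∀ w : List Bool, w.length = n →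
      occ w (db n ++ List.replicate (n - 1) false) = 1 := by
    intro w hw
    have h := (db_spec n (by omega)).1.2 w hw
    have ht : (db n).take (n - 1) = List.replicate (n - 1) false := by
      obtain ⟨r, hr⟩ := db_starts_zero n (by omega)
      rw [← hr, List.take_append_of_le_length (by simp), List.take_replicate]
      congr 1
      omega
    rwa [ht] at h
  refine ⟨prefix_Sblk n hn, h2, fun v hv => ?_⟩
  have a := h2 (v ++ [false]) (by simp; omega)
  have b := h2 (v ++ [true]) (by simp; omega)
  exact ⟨occ_two _ _ a b, a, b⟩
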